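/- arXiv:math/0101026 — 2 statements merged into one kernel-verified Lean document; each statement's English description precedes it below -/
import Mathlib

section
/- Every homeomorphism Z : ℝ → ℝ satisfying Z(x) > x for all x ∈ ℝ is topologically conjugate to the unit translation: there exists a strictly increasing homeomorphism h : ℝ → ℝ such that h(Z(x)) = h(x) + 1 for all x ∈ ℝ. Consequently, any group of homeomorphisms of ℝ all of whose elements commute with Z is conjugate, by h, to a group of homeomorphisms of ℝ commuting with the translation x ↦ x + 1. -/
/-!
Fix a point `a`. Since `Z` has no fixed point, the orbit `n ↦ Z ^ n a` is unbounded in both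
directions: its supremum or infimum would be fixed by `Z`. Hence the intervals
`[Z ^ n a, Z ^ (n + 1) a)` tile the line, just as the intervals `[n, n + 1)` do. Any increasing
bijection `[0, 1) → [a, Z a)` therefore extends, by equivariance, to an increasing bijection of the
line that carries the unit translation to `Z`; its inverse is the required conjugacy.
-/

open Function Set

section Orbit

variable {α : Type*}

lemma zpow_add_one_apply [LE α] (e : α ≃o α) (n : ℤ) (x : α) :
    (e ^ (n + 1)) x = (e ^ n) (e x) := by
  rw [zpow_add_one, RelIso.mul_apply]

lemma zpow_add_one_apply' [LE α] (e : α ≃o α) (n : ℤ) (x : α) :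
    (e ^ (n + 1)) x = e ((e ^ n) x) := by
  rw [add_comm, zpow_one_add, RelIso.mul_apply]

lemma strictMono_zpow_apply [Preorder α] {e : α ≃o α} (he : ∀ x, x < e x) (a : α) :
    StrictMono fun n : ℤ => (e ^ n) a :=
  strictMono_int_of_lt_succ fun n => by
    rw [zpow_add_one_apply']
    exact he _

lemma not_bddAbove_range_zpow_apply [ConditionallyCompleteLattice α] {e : α ≃o α}
    (he : ∀ x, e x ≠ x) (a : α) : ¬BddAbove (range fun n : ℤ => (e ^ n) a) := fun hbdd =>
  he (⨆ n : ℤ, (e ^ n) a) <|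
    calc e (⨆ n : ℤ, (e ^ n) a)
      _ = ⨆ n : ℤ, e ((e ^ n) a) := e.map_ciSup hbdd
      _ = ⨆ n : ℤ, (e ^ (n + 1)) a := by simp only [zpow_add_one_apply']
      _ = ⨆ n : ℤ, (e ^ n) a := (Equiv.addRight (1 : ℤ)).iSup_comp (g := fun n => (e ^ n) a)

lemma not_bddBelow_range_zpow_apply [ConditionallyCompleteLattice α] {e : α ≃o α}
    (he : ∀ x, e x ≠ x) (a : α) : ¬BddBelow (range fun n : ℤ => (e ^ n) a) := fun hbdd =>
  he (⨅ n : ℤ, (e ^ n) a) <|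
    calc e (⨅ n : ℤ, (e ^ n) a)
      _ = ⨅ n : ℤ, e ((e ^ n) a) := e.map_ciInf hbdd
      _ = ⨅ n : ℤ, (e ^ (n + 1)) a := by simp only [zpow_add_one_apply']
      _ = ⨅ n : ℤ, (e ^ n) a := (Equiv.addRight (1 : ℤ)).iInf_comp (g := fun n => (e ^ n) a)

lemma exists_mem_Ico_apply_add_one [LinearOrder α] {f : ℤ → α} (hf : Monotone f)
    (habove : ¬BddAbove (range f)) (hbelow : ¬BddBelow (range f)) (x : α) :
    ∃ n, x ∈ Ico (f n) (f (n + 1)) := by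
  obtain ⟨_, ⟨u, rfl⟩, hu⟩ := not_bddAbove_iff.1 habove x
  obtain ⟨_, ⟨l, rfl⟩, hl⟩ := not_bddBelow_iff.1 hbelow x
  obtain ⟨n, hn, hmax⟩ := Int.exists_greatest_of_bdd (P := fun n => f n ≤ x)
    ⟨u, fun n hn => (hf.reflect_lt (hn.trans_lt hu)).le⟩ ⟨l, hl.le⟩
  exact ⟨n, hn, not_le.1 fun h => (lt_add_one n).not_ge (hmax _ h)⟩

lemma exists_mem_Ico_zpow_apply_eq [ConditionallyCompleteLinearOrder α] {e : α ≃o α}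
    (he : ∀ x, x < e x) (a x : α) : ∃ n : ℤ, ∃ y ∈ Ico a (e a), (e ^ n) y = x := by
  obtain ⟨n, hn⟩ := exists_mem_Ico_apply_add_one (strictMono_zpow_apply he a).monotone
    (not_bddAbove_range_zpow_apply (fun y => (he y).ne') a)
    (not_bddBelow_range_zpow_apply (fun y => (he y).ne') a) x
  rw [zpow_add_one_apply, ← OrderIso.image_Ico] at hn
  exact ⟨n, hn⟩

end Orbit

section EquivariantExtension

variable {R α : Type*} [Ring R] [LinearOrder R] [FloorRing R]

/-- The extension of `φ : [0, 1) → α` to all of `R` that carries the translation `t ↦ t + 1` to the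
order automorphism `e`. Only the values of `φ` on `[0, 1)` matter. -/
def equivariantExtension [LE α] (e : α ≃o α) (φ : R → α) (t : R) : α :=
  (e ^ ⌊t⌋) (φ (Int.fract t))

variable [IsStrictOrderedRing R] {φ : R → α}

lemma semiconj_equivariantExtension [LE α] (e : α ≃o α) (φ : R → α) :
    Semiconj (equivariantExtension e φ) (· + 1) e := fun t => by
  simp only [equivariantExtension, Int.floor_add_one, Int.fract_add_one, zpow_add_one_apply']

lemma strictMono_equivariantExtension [Preorder α] {e : α ≃o α} (he : ∀ x, x < e x) {a : α}
    (hφ : StrictMonoOn φ (Ico 0 1)) (hφa : MapsTo φ (Ico 0 1) (Ico a (e a))) :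
    StrictMono (equivariantExtension e φ) := by
  have fract_mem (t : R) : Int.fract t ∈ Ico (0 : R) 1 := ⟨Int.fract_nonneg t, Int.fract_lt_one t⟩
  intro s t hst
  rcases (Int.floor_mono hst.le).eq_or_lt with hfloor | hfloor
  · have hfract : Int.fract s < Int.fract t := by
      simpa only [Int.fract, hfloor, sub_lt_sub_iff_right] using hst
    simpa only [equivariantExtension, hfloor, OrderIso.lt_iff_lt] using
      hφ (fract_mem s) (fract_mem t) hfract
  · calc (e ^ ⌊s⌋) (φ (Int.fract s))
      _ < (e ^ ⌊s⌋) (e a) := (e ^ ⌊s⌋).strictMono (hφa (fract_mem s)).2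
      _ = (e ^ (⌊s⌋ + 1)) a := (zpow_add_one_apply e _ _).symm
      _ ≤ (e ^ ⌊t⌋) a := (strictMono_zpow_apply he a).monotone (Int.add_one_le_of_lt hfloor)
      _ ≤ (e ^ ⌊t⌋) (φ (Int.fract t)) := (e ^ ⌊t⌋).monotone (hφa (fract_mem t)).1

lemma surjective_equivariantExtension [ConditionallyCompleteLinearOrder α] {e : α ≃o α}
    (he : ∀ x, x < e x) {a : α} (hφa : SurjOn φ (Ico 0 1) (Ico a (e a))) :
    Surjective (equivariantExtension e φ) := fun x => by
  obtain ⟨n, y, hy, rfl⟩ := exists_mem_Ico_zpow_apply_eq he a x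
  obtain ⟨s, hs, rfl⟩ := hφa hy
  refine ⟨n + s, ?_⟩
  rw [equivariantExtension, Int.floor_intCast_add, Int.fract_intCast_add,
    Int.floor_eq_zero_iff.2 hs, Int.fract_eq_self.2 hs, add_zero]

theorem exists_orderIso_semiconj_add_one [ConditionallyCompleteLinearOrder α] {e : α ≃o α}
    (he : ∀ x, x < e x) {a : α} (hφ : StrictMonoOn φ (Ico 0 1))
    (hφa : φ '' Ico 0 1 = Ico a (e a)) : ∃ g : R ≃o α, Semiconj g (· + 1) e := by
  have hmono : StrictMono (equivariantExtension e φ) :=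
    strictMono_equivariantExtension he hφ (mapsTo_iff_image_subset.2 hφa.subset)
  have hsurj : Surjective (equivariantExtension e φ) :=
    surjective_equivariantExtension he hφa.superset
  exact ⟨hmono.orderIsoOfSurjective _ hsurj, semiconj_equivariantExtension e φ⟩

end EquivariantExtension

theorem exists_orderIso_real_semiconj_add_one {e : ℝ ≃o ℝ} (he : ∀ x, x < e x) :
    ∃ g : ℝ ≃o ℝ, Semiconj g (· + 1) e := by
  have hpos : 0 < e 0 := he 0
  refine exists_orderIso_semiconj_add_one (φ := (e 0 * ·)) (a := 0) he ?_ ?_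
  · exact (strictMono_mul_left_of_pos hpos).strictMonoOn _
  · rw [image_mul_left_Ico hpos, mul_zero, mul_one]

lemma strictMono_of_continuous_of_injective_of_forall_lt {α : Type*}
    [ConditionallyCompleteLinearOrder α] [TopologicalSpace α] [OrderTopology α] [DenselyOrdered α]
    {f : α → α} (hcont : Continuous f) (hinj : Injective f) (hlt : ∀ x, x < f x) :
    StrictMono f := by
  rcases hcont.strictMono_of_inj hinj with hmono | hanti
  · exact hmono
  · exact fun x _ _ => absurd (hanti (hlt x)) (hlt (f x)).not_gt

theorem conjugate_to_unit_translation_general (Z : ℝ ≃ₜ ℝ) (hZ : ∀ x : ℝ, x < Z x) :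
    ∃ h : ℝ ≃o ℝ, Semiconj h Z (· + 1) ∧
      ∀ f : ℝ → ℝ, Function.Commute f Z → Function.Commute (h ∘ f ∘ h.symm) (· + 1) := by
  have hmono := strictMono_of_continuous_of_injective_of_forall_lt Z.continuous Z.injective hZ
  obtain ⟨g, hg⟩ : ∃ g : ℝ ≃o ℝ, Semiconj g (· + 1) Z :=
    exists_orderIso_real_semiconj_add_one (e := hmono.orderIsoOfSurjective Z Z.surjective) hZ
  have hg_symm : Semiconj g.symm Z (· + 1) := fun x => by
    rw [OrderIso.symm_apply_eq, hg.eq, g.apply_symm_apply]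
  exact ⟨g.symm, hg_symm, fun f hf => hg_symm.comp_left (hf.semiconj.comp_left hg)⟩

/-- **Fixed-point-free homeomorphisms of ℝ are conjugate to the unit translation.**

If `Z` is a homeomorphism of `ℝ` with `Z x > x` for all `x`, then there is a strictly
increasing homeomorphism `h` of `ℝ` with `h (Z x) = h x + 1` for all `x`.  Consequently any
homeomorphism `f` of `ℝ` commuting with `Z` is conjugated by `h` to a homeomorphism of `ℝ`
commuting with the translation `x ↦ x + 1`. -/
theorem conjugate_to_unit_translation (Z : ℝ ≃ₜ ℝ) (hZ : ∀ x : ℝ, x < Z x) :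
    ∃ h : ℝ ≃o ℝ, (∀ x : ℝ, h (Z x) = h x + 1) ∧
      ∀ f : ℝ ≃ₜ ℝ, (∀ x : ℝ, f (Z x) = Z (f x)) →
        ∀ x : ℝ, h (f (h.symm (x + 1))) = h (f (h.symm x)) + 1 := by
  obtain ⟨h, hZh, hcomm⟩ := conjugate_to_unit_translation_general Z hZ
  exact ⟨h, hZh, fun f hf => hcomm f hf⟩
end

section
/- Let R be a laminar relation on S¹ and let φ : S¹ → S¹ be a monotone map. Then the set φ(R) := {(φ(x), φ(y)) : (x,y) ∈ R, φ(x) ≠ φ(y)} is again a laminar relation on S¹: it is symmetric, closed in S¹ × S¹ minus the diagonal, and unlinked. -/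
/-- The circle, modelled as `ℝ/ℤ`. -/
abbrev 𝕊 : Type := AddCircle (1 : ℝ)

/-- A triple `(x, y, z)` of points of the circle is *positively ordered* if the three points
are distinct and `y` lies in the open counterclockwise arc from `x` to `z`:  there are lifts
`a < b < c < a + 1` of `x`, `y`, `z` respectively. -/
def PosOrdered (x y z : 𝕊) : Prop :=
  ∃ a b c : ℝ, a < b ∧ b < c ∧ c < a + 1 ∧ x = (a : 𝕊) ∧ y = (b : 𝕊) ∧ z = (c : 𝕊)

/-- A triple `(x, y, z)` is *negatively ordered* if `y` lies in the open counterclockwise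
arc from `z` to `x`. -/
def NegOrdered (x y z : 𝕊) : Prop := PosOrdered z y x

/-- A *monotone map* of the circle: a continuous map of degree one (it admits a continuous
lift `F : ℝ → ℝ` with `F (x + 1) = F x + 1`) which does not reverse the circular order:
the image of a positively ordered triple is never negatively ordered. -/
def IsMonotoneCircleMap (φ : 𝕊 → 𝕊) : Prop :=
  Continuous φ ∧
  (∃ F : ℝ → ℝ, Continuous F ∧ (∀ x : ℝ, F (x + 1) = F x + 1) ∧
      ∀ x : ℝ, φ (x : 𝕊) = ((F x : ℝ) : 𝕊)) ∧
  ∀ x y z : 𝕊, PosOrdered x y z → ¬ NegOrdered (φ x) (φ y) (φ z)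

/-- The pair `{x, y}` of distinct points *links* the pair `{z, w}` of distinct points if
`z` and `w` lie in different connected components of `𝕊 \ {x, y}`. -/
def Links (x y z w : 𝕊) : Prop :=
  z ∈ ({x, y}ᶜ : Set 𝕊) ∧ w ∈ ({x, y}ᶜ : Set 𝕊) ∧
    connectedComponentIn ({x, y}ᶜ : Set 𝕊) z ≠ connectedComponentIn ({x, y}ᶜ : Set 𝕊) w

/-- The complement of the diagonal in `𝕊 × 𝕊`. -/
def OffDiagonal : Set (𝕊 × 𝕊) := {p | p.1 ≠ p.2}

/-- A *laminar relation* on the circle: a symmetric subset of `𝕊 × 𝕊` minus the diagonal,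
closed as a subset of `𝕊 × 𝕊` minus the diagonal, such that no two of its pairs link
each other. -/
def IsLaminar (R : Set (𝕊 × 𝕊)) : Prop :=
  R ⊆ OffDiagonal ∧
  (∀ x y : 𝕊, (x, y) ∈ R → (y, x) ∈ R) ∧
  closure R ∩ OffDiagonal ⊆ R ∧
  ∀ x y z w : 𝕊, (x, y) ∈ R → (z, w) ∈ R → ¬ Links x y z w

/-!
A weakly order-preserving map of circular orders reflects strict betweenness, since its failure at
`x, y, z` means that `z, y, x` is strictly ordered or degenerate, and either passes to the images.
The complement of two distinct points of the circle is the disjoint union of the two open arcs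
between them, so linking says that two points lie in opposite arcs; thus a link between two image
pairs already links the original pairs. Closedness away from the diagonal passes to the image by
compactness of `S¹ × S¹`: an off-diagonal limit of image pairs is the image of a point of
`closure R`, which is itself off the diagonal.
-/

open Set

section Topology

variable {X Y : Type*} [TopologicalSpace X] [TopologicalSpace Y]

theorem connectedComponentIn_union_of_mem_left {U V : Set X} {x : X} (hU : IsOpen U)
    (hV : IsOpen V) (hUV : Disjoint U V) (hUc : IsPreconnected U) (hx : x ∈ U) :
    connectedComponentIn (U ∪ V) x = U :=
  Subset.antisymm
    (isPreconnected_connectedComponentIn.subset_left_of_subset_union hU hV hUV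
      (connectedComponentIn_subset _ _) ⟨x, mem_connectedComponentIn (Or.inl hx), hx⟩)
    (hUc.subset_connectedComponentIn hx subset_union_left)

theorem connectedComponentIn_union_ne_iff {U V : Set X} {x y : X} (hU : IsOpen U)
    (hV : IsOpen V) (hUV : Disjoint U V) (hUc : IsPreconnected U) (hVc : IsPreconnected V)
    (hx : x ∈ U ∪ V) (hy : y ∈ U ∪ V) :
    connectedComponentIn (U ∪ V) x ≠ connectedComponentIn (U ∪ V) y ↔
      x ∈ U ∧ y ∈ V ∨ x ∈ V ∧ y ∈ U := by
  have hleft {t : X} (ht : t ∈ U) : connectedComponentIn (U ∪ V) t = U :=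
    connectedComponentIn_union_of_mem_left hU hV hUV hUc ht
  have hright {t : X} (ht : t ∈ V) : connectedComponentIn (U ∪ V) t = V := by
    rw [union_comm]
    exact connectedComponentIn_union_of_mem_left hV hU hUV.symm hVc ht
  rw [disjoint_left] at hUV
  rcases hx with hx | hx <;> rcases hy with hy | hy <;> grind

theorem closure_image_prodMap_diff_diagonal_subset [CompactSpace X] [T2Space Y] {f : X → Y}
    (hf : Continuous f) {R : Set (X × X)} (hR : closure R \ diagonal X ⊆ R) :
    closure (Prod.map f f '' R) \ diagonal Y ⊆ Prod.map f f '' R := by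
  rw [← image_closure_of_isCompact isClosed_closure.isCompact (hf.prodMap hf).continuousOn]
  rintro _ ⟨⟨⟨x, y⟩, hxy, rfl⟩, hne⟩
  exact mem_image_of_mem _ (hR ⟨hxy, fun h ↦ hne (congrArg f h)⟩)

end Topology

section CircularOrder

theorem disjoint_cIoo_swap {α : Type*} [CircularPreorder α] (x y : α) :
    Disjoint (cIoo x y) (cIoo y x) :=
  disjoint_left.2 fun _ h h' ↦ h.not_sbtw h'

variable {α β : Type*} [CircularOrder α] [CircularPreorder β]

theorem cIoo_union_cIoo_swap {x y : α} (hxy : x ≠ y) : cIoo x y ∪ cIoo y x = {x, y}ᶜ := by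
  ext z
  simp only [mem_union, mem_cIoo, mem_compl_iff, mem_insert_iff, mem_singleton_iff]
  constructor
  · rintro h (rfl | rfl) <;> simp only [sbtw_irrefl_left, sbtw_irrefl_right, or_self] at h
  · intro hz
    by_contra! h
    have := (btw_iff_not_sbtw.2 h.1).antisymm (btw_iff_not_sbtw.2 h.2)
    grind

theorem sbtw_of_sbtw_map {f : α → β} (hf : ∀ ⦃x y z⦄, sbtw x y z → btw (f x) (f y) (f z))
    {x y z : α} (h : sbtw (f x) (f y) (f z)) : sbtw x y z := by
  by_contra hxyz
  have hzyx : ¬ sbtw z y x := fun h' ↦ h.not_btw (hf h')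
  rcases (btw_iff_not_sbtw.2 hzyx).antisymm (btw_iff_not_sbtw.2 hxyz) with rfl | rfl | rfl
  · exact sbtw_irrefl_left h
  · exact sbtw_irrefl_right h
  · exact sbtw_irrefl_left_right h

end CircularOrder

section AddCircle

variable {𝕜 : Type*} [AddCommGroup 𝕜] [LinearOrder 𝕜] [IsOrderedAddMonoid 𝕜] [Archimedean 𝕜]
  {p : 𝕜} [hp : Fact (0 < p)]

theorem coe_toIcoMod (a b : 𝕜) : ((toIcoMod hp.out a b : 𝕜) : AddCircle p) = b :=
  AddCircle.coe_equivIco (a := a) (y := (b : AddCircle p))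

theorem coe_toIocMod (a b : 𝕜) : ((toIocMod hp.out a b : 𝕜) : AddCircle p) = b :=
  AddCircle.coe_equivIoc (a := a) (y := (b : AddCircle p))

theorem sbtw_coe_iff {a b c : 𝕜} :
    sbtw (a : AddCircle p) b c ↔ toIocMod hp.out a b < toIcoMod hp.out a c := by
  rw [sbtw_iff_not_btw, btw_cyclic, QuotientAddGroup.btw_coe_iff, not_le]

theorem cIoo_coe (a c : 𝕜) :
    cIoo (a : AddCircle p) c = (↑) '' Ioo a (toIcoMod hp.out a c) := by
  ext y
  constructor
  · obtain ⟨b, rfl⟩ := QuotientAddGroup.mk_surjective y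
    intro h
    exact ⟨toIocMod hp.out a b, ⟨left_lt_toIocMod _ _ _, sbtw_coe_iff.1 h⟩, coe_toIocMod a b⟩
  · rintro ⟨b, ⟨hab, hbc⟩, rfl⟩
    have hb : b ∈ Ioc a (a + p) := ⟨hab, (hbc.trans (toIcoMod_lt_right _ _ _)).le⟩
    rwa [mem_cIoo, sbtw_coe_iff, (toIocMod_eq_self _).2 hb]

theorem sbtw_iff_exists_lifts {x y z : AddCircle p} :
    sbtw x y z ↔ ∃ a b c : 𝕜, a < b ∧ b < c ∧ c < a + p ∧ x = a ∧ y = b ∧ z = c := by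
  constructor
  · obtain ⟨a, rfl⟩ := QuotientAddGroup.mk_surjective x
    obtain ⟨c, rfl⟩ := QuotientAddGroup.mk_surjective z
    intro h
    obtain ⟨b, ⟨hab, hbc⟩, rfl⟩ := (cIoo_coe a c).subset h
    exact ⟨a, b, toIcoMod hp.out a c, hab, hbc, toIcoMod_lt_right _ _ _, rfl, rfl,
      (coe_toIcoMod a c).symm⟩
  · rintro ⟨a, b, c, hab, hbc, hca, rfl, rfl, rfl⟩
    rwa [sbtw_coe_iff, (toIocMod_eq_self _).2 ⟨hab, (hbc.trans hca).le⟩,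
      (toIcoMod_eq_self _).2 ⟨(hab.trans hbc).le, hca⟩]

theorem isOpen_cIoo [TopologicalSpace 𝕜] [OrderTopology 𝕜] (x y : AddCircle p) :
    IsOpen (cIoo x y) := by
  obtain ⟨a, rfl⟩ := QuotientAddGroup.mk_surjective x
  obtain ⟨c, rfl⟩ := QuotientAddGroup.mk_surjective y
  exact cIoo_coe (p := p) a c ▸ QuotientAddGroup.isOpenMap_coe _ isOpen_Ioo

theorem isPreconnected_cIoo {p : ℝ} [Fact (0 < p)] (x y : AddCircle p) :
    IsPreconnected (cIoo x y) := by
  obtain ⟨a, rfl⟩ := QuotientAddGroup.mk_surjective x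
  obtain ⟨c, rfl⟩ := QuotientAddGroup.mk_surjective y
  exact cIoo_coe (p := p) a c ▸ isPreconnected_Ioo.image _ (AddCircle.continuous_mk' p).continuousOn

end AddCircle

theorem posOrdered_iff_sbtw {x y z : 𝕊} : PosOrdered x y z ↔ sbtw x y z :=
  sbtw_iff_exists_lifts.symm

theorem links_iff_sbtw {x y z w : 𝕊} (hxy : x ≠ y) :
    Links x y z w ↔ sbtw x z y ∧ sbtw y w x ∨ sbtw y z x ∧ sbtw x w y := by
  have hne_iff {z w : 𝕊} (hz : z ∈ cIoo x y ∪ cIoo y x) (hw : w ∈ cIoo x y ∪ cIoo y x) :=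
    connectedComponentIn_union_ne_iff (isOpen_cIoo x y) (isOpen_cIoo y x)
      (disjoint_cIoo_swap x y) (isPreconnected_cIoo x y) (isPreconnected_cIoo y x) hz hw
  rw [Links, ← cIoo_union_cIoo_swap hxy]
  constructor
  · rintro ⟨hz, hw, hne⟩
    exact (hne_iff hz hw).1 hne
  · intro h
    have hz : z ∈ cIoo x y ∪ cIoo y x := h.imp And.left And.left
    have hw : w ∈ cIoo x y ∪ cIoo y x := h.symm.imp And.right And.right
    exact ⟨hz, hw, (hne_iff hz hw).2 h⟩

theorem links_of_links_map {f : 𝕊 → 𝕊} (hf : ∀ ⦃x y z⦄, sbtw x y z → btw (f x) (f y) (f z))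
    {x y z w : 𝕊} (hxy : f x ≠ f y) (h : Links (f x) (f y) (f z) (f w)) : Links x y z w := by
  rw [links_iff_sbtw (ne_of_apply_ne f hxy)]
  exact ((links_iff_sbtw hxy).1 h).imp
    (And.imp (sbtw_of_sbtw_map hf) (sbtw_of_sbtw_map hf))
    (And.imp (sbtw_of_sbtw_map hf) (sbtw_of_sbtw_map hf))

theorem IsMonotoneCircleMap.btw_map {φ : 𝕊 → 𝕊} (hφ : IsMonotoneCircleMap φ) ⦃x y z : 𝕊⦄
    (h : sbtw x y z) : btw (φ x) (φ y) (φ z) :=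
  btw_iff_not_sbtw.2 fun h' ↦
    hφ.2.2 x y z (posOrdered_iff_sbtw.2 h) (posOrdered_iff_sbtw.2 h')

/-- **Pushforward of a laminar relation under a monotone map.**  If `R` is a laminar
relation on the circle and `φ` is a monotone map of the circle, then
`φ(R) = {(φ x, φ y) : (x, y) ∈ R, φ x ≠ φ y}` is again a laminar relation:  symmetric,
closed in `𝕊 × 𝕊` minus the diagonal, and unlinked. -/
theorem monotone_image_laminar (R : Set (𝕊 × 𝕊)) (hR : IsLaminar R)
    (φ : 𝕊 → 𝕊) (hφ : IsMonotoneCircleMap φ) :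
    IsLaminar {p : 𝕊 × 𝕊 | ∃ x y : 𝕊, (x, y) ∈ R ∧ φ x ≠ φ y ∧ p = (φ x, φ y)} := by
  obtain ⟨-, hsymm, hclosed, hunlinked⟩ := hR
  refine ⟨?offDiagonal, ?symmetric, ?closed, ?unlinked⟩
  case offDiagonal =>
    rintro _ ⟨x, y, -, hne, rfl⟩
    exact hne
  case symmetric =>
    rintro _ _ ⟨x, y, hxy, hne, ⟨⟩⟩
    exact ⟨y, x, hsymm x y hxy, hne.symm, rfl⟩
  case closed =>
    rintro p ⟨hp, hne⟩
    have hp' : p ∈ closure (Prod.map φ φ '' R) := by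
      refine closure_mono ?_ hp
      rintro _ ⟨x, y, hxy, -, rfl⟩
      exact ⟨(x, y), hxy, rfl⟩
    obtain ⟨⟨x, y⟩, hxy, rfl⟩ :=
      closure_image_prodMap_diff_diagonal_subset hφ.1 hclosed ⟨hp', hne⟩
    exact ⟨x, y, hxy, hne, rfl⟩
  case unlinked =>
    rintro _ _ _ _ ⟨x, y, hxy, hne, ⟨⟩⟩ ⟨z, w, hzw, -, ⟨⟩⟩ hlinks
    exact hunlinked x y z w hxy hzw (links_of_links_map hφ.btw_map hne hlinks)
end
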